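/- Let G and G' be graphs on vertex sets {1,…,t} and {1,…,t'} respectively, with edge sets E and E', and let U ∈ R^{t×n} and U' ∈ R^{t'×n} have nonnegative entries with each row summing to 1. If seg(G,U) ⊆ seg(G',U'), then SDD^G_+(U) ⊆ SDD^{G'}_+(U'). -/

import Mathlib

open Matrix Set

noncomputable section

/-- The embedding `ι_{ij} : S² → Sⁿ` placing a 2×2 symmetric matrix into
rows/columns `i, j` with zeros elsewhere. -/
def iota {n : ℕ} (i j : Fin n) (S : Matrix (Fin 2) (Fin 2) ℝ) :
    Matrix (Fin n) (Fin n) ℝ :=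
  Matrix.of fun r s =>
    (if r = i ∧ s = i then S 0 0 else 0) +
    (if r = i ∧ s = j then S 0 1 else 0) +
    (if r = j ∧ s = i then S 1 0 else 0) +
    (if r = j ∧ s = j then S 1 1 else 0)

/-- The cone `SDDⁿ = Σ_{i<j} ι_{ij}(S²₊)` of scaled diagonally dominant matrices. -/
def SDD (n : ℕ) : Set (Matrix (Fin n) (Fin n) ℝ) :=
  {X | ∃ S : Fin n → Fin n → Matrix (Fin 2) (Fin 2) ℝ,
    (∀ i j : Fin n, (S i j).PosSemidef) ∧
    X = ∑ i : Fin n, ∑ j : Fin n, if i < j then iota i j (S i j) else 0}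

/-- `Nⁿ`: symmetric entrywise nonnegative matrices. -/
def NonnegMat (n : ℕ) : Set (Matrix (Fin n) (Fin n) ℝ) :=
  {X | X.IsSymm ∧ ∀ i j, 0 ≤ X i j}

/-- Dual cone within the space of symmetric matrices, w.r.t. the trace inner product. -/
def dualCone {n : ℕ} (C : Set (Matrix (Fin n) (Fin n) ℝ)) :
    Set (Matrix (Fin n) (Fin n) ℝ) :=
  {Y | Y.IsSymm ∧ ∀ X ∈ C, 0 ≤ (X * Y).trace}

open scoped Classical in
/-- `SDD^G = Σ_{{i,j}∈E} ι_{ij}(S²₊)` (equal to `{0}` if `E = ∅`). -/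
def SDDG {t : ℕ} (G : SimpleGraph (Fin t)) : Set (Matrix (Fin t) (Fin t) ℝ) :=
  {X | ∃ S : Fin t → Fin t → Matrix (Fin 2) (Fin 2) ℝ,
    (∀ i j : Fin t, (S i j).PosSemidef) ∧
    X = ∑ i : Fin t, ∑ j : Fin t, if i < j ∧ G.Adj i j then iota i j (S i j) else 0}

/-- `SDD^G₊ = SDD^G ∩ Nᵗ`. -/
def SDDGplus {t : ℕ} (G : SimpleGraph (Fin t)) : Set (Matrix (Fin t) (Fin t) ℝ) :=
  SDDG G ∩ NonnegMat t

/-- `SDD^G₊(U) = Uᵀ (SDD^G₊) U`. -/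
def SDDGplusU {t n : ℕ} (G : SimpleGraph (Fin t)) (U : Matrix (Fin t) (Fin n) ℝ) :
    Set (Matrix (Fin n) (Fin n) ℝ) :=
  {X | ∃ Y ∈ SDDGplus G, X = Uᵀ * Y * U}

/-- `seg(G,U) = ∪_{{i,j}∈E} [uᵢ, uⱼ]`. -/
def seg {t n : ℕ} (G : SimpleGraph (Fin t)) (U : Matrix (Fin t) (Fin n) ℝ) :
    Set (Fin n → ℝ) :=
  {v | ∃ i j : Fin t, G.Adj i j ∧ v ∈ segment ℝ (U i) (U j)}

lemma iota_zero {n : ℕ} (i j : Fin n) : iota i j 0 = 0 := by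
  ext r s
  simp [iota]

lemma iota_add {n : ℕ} (i j : Fin n) (A B : Matrix (Fin 2) (Fin 2) ℝ) :
    iota i j (A + B) = iota i j A + iota i j B := by
  ext r s
  simp only [iota, Matrix.of_apply, Matrix.add_apply]
  split_ifs <;> ring

lemma iota_vecMulVec {n : ℕ} (i j : Fin n) (a b : ℝ) :
    iota i j (vecMulVec ![a, b] ![a, b]) =
      vecMulVec (Pi.single i a + Pi.single j b) (Pi.single i a + Pi.single j b) := by
  ext r s
  simp only [iota, Matrix.of_apply, vecMulVec_apply, Pi.add_apply, Pi.single_apply,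
    Matrix.cons_val_zero, Matrix.cons_val_one, ite_and]
  split_ifs <;> ring

lemma transpose_mul_iota_vecMulVec_mul {t n : ℕ} (U : Matrix (Fin t) (Fin n) ℝ)
    (i j : Fin t) (a b : ℝ) :
    Uᵀ * iota i j (vecMulVec ![a, b] ![a, b]) * U =
      vecMulVec (a • U i + b • U j) (a • U i + b • U j) := by
  have h : (Pi.single i a + Pi.single j b) ᵥ* U = a • U i + b • U j := by
    rw [Matrix.add_vecMul, Matrix.single_vecMul, Matrix.single_vecMul]
    rfl
  rw [iota_vecMulVec, Matrix.mul_vecMulVec, Matrix.vecMulVec_mul, Matrix.mulVec_transpose, h]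

/-- A positive semidefinite 2×2 matrix with nonnegative off-diagonal entries is completely
positive. -/
lemma Matrix.PosSemidef.exists_eq_vecMulVec_add_vecMulVec {S : Matrix (Fin 2) (Fin 2) ℝ}
    (hS : S.PosSemidef) (h01 : 0 ≤ S 0 1) :
    ∃ a b c : ℝ, 0 ≤ a ∧ 0 ≤ b ∧ 0 ≤ c ∧
      S = vecMulVec ![a, b] ![a, b] + vecMulVec ![0, c] ![0, c] := by
  have hsymm : S 1 0 = S 0 1 := by simpa using hS.isHermitian.apply 0 1
  have h00 : 0 ≤ S 0 0 := hS.diag_nonneg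
  have h11 : 0 ≤ S 1 1 := hS.diag_nonneg
  have hdet : 0 ≤ S 0 0 * S 1 1 - S 0 1 * S 0 1 := by
    simpa [Matrix.det_fin_two, hsymm] using hS.det_nonneg
  rcases h00.eq_or_lt with h0 | hpos
  · have hzero : S 0 1 = 0 := by
      rw [← h0] at hdet
      nlinarith
    refine ⟨0, 0, √(S 1 1), le_rfl, le_rfl, Real.sqrt_nonneg _, ?_⟩
    ext r s
    fin_cases r <;> fin_cases s <;>
      simp [← h0, hzero, hsymm, Real.mul_self_sqrt h11]
  · have hsqrt : √(S 0 0) * √(S 0 0) = S 0 0 := Real.mul_self_sqrt h00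
    have hne : √(S 0 0) ≠ 0 := (Real.sqrt_pos.2 hpos).ne'
    have hschur : 0 ≤ S 1 1 - S 0 1 * S 0 1 / S 0 0 := by
      rw [sub_nonneg, div_le_iff₀ hpos]
      linarith
    refine ⟨√(S 0 0), S 0 1 / √(S 0 0), √(S 1 1 - S 0 1 * S 0 1 / S 0 0),
      Real.sqrt_nonneg _, div_nonneg h01 (Real.sqrt_nonneg _), Real.sqrt_nonneg _, ?_⟩
    ext r s
    fin_cases r <;> fin_cases s <;>
      simp [hsymm, hsqrt, Real.mul_self_sqrt hschur, hne, mul_div_cancel₀,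
        div_mul_div_comm]

lemma zero_mem_SDDG {t : ℕ} (G : SimpleGraph (Fin t)) : 0 ∈ SDDG G :=
  ⟨fun _ _ => 0, fun _ _ => Matrix.PosSemidef.zero, by simp [iota_zero]⟩

lemma add_mem_SDDG {t : ℕ} {G : SimpleGraph (Fin t)} {X Y : Matrix (Fin t) (Fin t) ℝ}
    (hX : X ∈ SDDG G) (hY : Y ∈ SDDG G) : X + Y ∈ SDDG G := by
  obtain ⟨S, hS, rfl⟩ := hX
  obtain ⟨T, hT, rfl⟩ := hY
  refine ⟨fun i j => S i j + T i j, fun i j => (hS i j).add (hT i j), ?_⟩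
  simp only [← Finset.sum_add_distrib]
  refine Finset.sum_congr rfl fun i _ => Finset.sum_congr rfl fun j _ => ?_
  split_ifs
  · rw [iota_add]
  · rw [add_zero]

lemma iota_mem_SDDG {t : ℕ} {G : SimpleGraph (Fin t)} {i j : Fin t} (hij : i < j)
    (hadj : G.Adj i j) {S : Matrix (Fin 2) (Fin 2) ℝ} (hS : S.PosSemidef) :
    iota i j S ∈ SDDG G := by
  refine ⟨fun k l => if k = i ∧ l = j then S else 0, fun k l => ?_, ?_⟩
  · dsimp only
    split_ifs
    exacts [hS, Matrix.PosSemidef.zero]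
  · rw [Finset.sum_eq_single i, Finset.sum_eq_single j]
    · simp [hij, hadj]
    · intro l _ hl
      simp [hl, iota_zero]
    · simp
    · intro k _ hk
      simp [hk, iota_zero]
    · simp

lemma sum_iota_apply_of_lt {t : ℕ} (p : Fin t → Fin t → Prop) [∀ i j, Decidable (p i j)]
    (S : Fin t → Fin t → Matrix (Fin 2) (Fin 2) ℝ) {i j : Fin t} (hij : i < j) (hp : p i j) :
    (∑ k, ∑ l, if k < l ∧ p k l then iota k l (S k l) else 0) i j = S i j 0 1 := by
  simp only [Matrix.sum_apply]
  rw [Finset.sum_eq_single i, Finset.sum_eq_single j]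
  · simp [hij, hp, iota, hij.ne, hij.ne']
  · intro l _ hl
    split_ifs with h
    · simp [iota, hij.ne', hl.symm, h.1.ne]
    · rfl
  · simp
  · intro k _ hk
    refine Finset.sum_eq_zero fun l _ => ?_
    split_ifs with h
    · have : ¬ (i = l ∧ j = k) := by
        rintro ⟨rfl, rfl⟩
        exact lt_asymm hij h.1
      have : ¬ (i = l ∧ j = l) := fun h => hij.ne (h.1.trans h.2.symm)
      simp [iota, hk.symm, *]
    · rfl
  · simp

lemma zero_mem_SDDGplusU {t n : ℕ} (G : SimpleGraph (Fin t)) (U : Matrix (Fin t) (Fin n) ℝ) :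
    0 ∈ SDDGplusU G U :=
  ⟨0, ⟨zero_mem_SDDG G, Matrix.isSymm_zero, fun _ _ => le_rfl⟩, by simp⟩

lemma add_mem_SDDGplusU {t n : ℕ} {G : SimpleGraph (Fin t)} {U : Matrix (Fin t) (Fin n) ℝ}
    {X Y : Matrix (Fin n) (Fin n) ℝ} (hX : X ∈ SDDGplusU G U) (hY : Y ∈ SDDGplusU G U) :
    X + Y ∈ SDDGplusU G U := by
  obtain ⟨A, ⟨hA, hAsymm, hAnonneg⟩, rfl⟩ := hX
  obtain ⟨B, ⟨hB, hBsymm, hBnonneg⟩, rfl⟩ := hY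
  exact ⟨A + B, ⟨add_mem_SDDG hA hB, hAsymm.add hBsymm,
    fun i j => add_nonneg (hAnonneg i j) (hBnonneg i j)⟩, by rw [Matrix.mul_add, Matrix.add_mul]⟩

lemma vecMulVec_mem_SDDGplusU {t n : ℕ} {G : SimpleGraph (Fin t)}
    {U : Matrix (Fin t) (Fin n) ℝ} {i j : Fin t} (hadj : G.Adj i j) {a b : ℝ}
    (ha : 0 ≤ a) (hb : 0 ≤ b) :
    vecMulVec (a • U i + b • U j) (a • U i + b • U j) ∈ SDDGplusU G U := by
  wlog hij : i < j generalizing i j a b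
  · rw [add_comm]
    exact this hadj.symm hb ha (lt_of_le_of_ne (not_lt.1 hij) hadj.ne')
  refine ⟨iota i j (vecMulVec ![a, b] ![a, b]), ⟨iota_mem_SDDG hij hadj ?_, ?_, ?_⟩,
    (transpose_mul_iota_vecMulVec_mul U i j a b).symm⟩
  · simpa using Matrix.posSemidef_vecMulVec_self_star ![a, b]
  · rw [iota_vecMulVec, Matrix.IsSymm, Matrix.transpose_vecMulVec]
  · have h : 0 ≤ (Pi.single i a + Pi.single j b : Fin t → ℝ) :=
      add_nonneg (Pi.single_nonneg.2 ha) (Pi.single_nonneg.2 hb)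
    rw [iota_vecMulVec]
    exact fun r s => mul_nonneg (h r) (h s)

/-- If the segments are included, then rank-one matrices of conic combinations of adjacent rows of
the first matrix belong to the cone of the second one. -/
lemma vecMulVec_mem_SDDGplusU_of_seg_subset {t t' n : ℕ} {G : SimpleGraph (Fin t)}
    {G' : SimpleGraph (Fin t')} {U : Matrix (Fin t) (Fin n) ℝ} {U' : Matrix (Fin t') (Fin n) ℝ}
    (hseg : seg G U ⊆ seg G' U') {i j : Fin t} (hadj : G.Adj i j) {a b : ℝ}
    (ha : 0 ≤ a) (hb : 0 ≤ b) :
    vecMulVec (a • U i + b • U j) (a • U i + b • U j) ∈ SDDGplusU G' U' := by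
  rcases (add_nonneg ha hb).eq_or_lt with h0 | hpos
  · obtain rfl : a = 0 := by linarith
    obtain rfl : b = 0 := by linarith
    simpa using zero_mem_SDDGplusU G' U'
  · obtain ⟨k, l, hkl, c, d, hc, hd, -, h⟩ := hseg (show (a / (a + b)) • U i + (b / (a + b)) • U j ∈
      seg G U from ⟨i, j, hadj, _, _, div_nonneg ha hpos.le, div_nonneg hb hpos.le,
        by rw [← add_div, div_self hpos.ne'], rfl⟩)
    have h' : a • U i + b • U j = ((a + b) * c) • U' k + ((a + b) * d) • U' l := by
      rw [mul_smul, mul_smul, ← smul_add, h, smul_add, smul_smul, smul_smul,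
        mul_div_cancel₀ _ hpos.ne', mul_div_cancel₀ _ hpos.ne']
    rw [h']
    exact vecMulVec_mem_SDDGplusU hkl (mul_nonneg hpos.le hc) (mul_nonneg hpos.le hd)

/-- If `seg(G,U) ⊆ seg(G',U')` then `SDD^G₊(U) ⊆ SDD^{G'}₊(U')`. -/
theorem SDDGplusU_mono_of_seg_subset {t t' n : ℕ}
    (G : SimpleGraph (Fin t)) (G' : SimpleGraph (Fin t'))
    (U : Matrix (Fin t) (Fin n) ℝ) (U' : Matrix (Fin t') (Fin n) ℝ)
    (hU : ∀ i j, 0 ≤ U i j) (hUrow : ∀ i, ∑ j, U i j = 1)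
    (hU' : ∀ i j, 0 ≤ U' i j) (hU'row : ∀ i, ∑ j, U' i j = 1)
    (hseg : seg G U ⊆ seg G' U') :
    SDDGplusU G U ⊆ SDDGplusU G' U' := by
  classical
  rintro _ ⟨_, ⟨⟨S, hS, rfl⟩, -, hnonneg⟩, rfl⟩
  simp only [Matrix.mul_sum, Matrix.sum_mul]
  have hsum {ι : Type} (s : Finset ι) (f : ι → Matrix (Fin n) (Fin n) ℝ)
      (hf : ∀ i ∈ s, f i ∈ SDDGplusU G' U') : ∑ i ∈ s, f i ∈ SDDGplusU G' U' :=
    Finset.sum_induction f (· ∈ SDDGplusU G' U') (fun _ _ => add_mem_SDDGplusU)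
      (zero_mem_SDDGplusU G' U') hf
  refine hsum _ _ fun i _ => hsum _ _ fun j _ => ?_
  split_ifs with h
  · have h01 : 0 ≤ S i j 0 1 := by
      rw [← sum_iota_apply_of_lt G.Adj S h.1 h.2]
      exact hnonneg i j
    obtain ⟨a, b, c, ha, hb, hc, hdecomp⟩ := (hS i j).exists_eq_vecMulVec_add_vecMulVec h01
    rw [hdecomp, iota_add, Matrix.mul_add, Matrix.add_mul, transpose_mul_iota_vecMulVec_mul,
      transpose_mul_iota_vecMulVec_mul]
    exact add_mem_SDDGplusU (vecMulVec_mem_SDDGplusU_of_seg_subset hseg h.2 ha hb)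
      (vecMulVec_mem_SDDGplusU_of_seg_subset hseg h.2 le_rfl hc)
  · simpa using zero_mem_SDDGplusU G' U'

end
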